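/- (Spherical S-lemma.) Let Q ∈ ℂ^{M×M} be Hermitian, r ∈ ℂ^M, s ∈ ℝ, and d > 0. Then the following are equivalent: (i) for every x ∈ ℂ^M with ‖x‖ ≤ d, f_{Q,r,s}(x) = Re(xᴴ Q x) + 2 Re(xᴴ r) + s ≥ 0; (ii) there exists μ ≥ 0 such that the (M+1)×(M+1) block matrix B(Q,r,s,μ,d) = [[Q + μ I_M, r],[rᴴ, s − μ d²]] is positive semidefinite. -/

import Mathlib

open Matrix ComplexOrder

/-!
Let `q` be nonnegative on the ball of radius `d`, and let `x` minimize it there. The first order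
condition says that `-∇q(x)` lies in the normal cone of the ball at `x`, so that
`A x + b = -μ x` with `μ ≥ 0`, and `μ = 0` or `‖x‖ = d`. Hence `x` is a critical point of the
Lagrangian `L y = q y + μ (‖y‖² - d²)`, `L x = q x`, and `L y = L x + ⟪y - x, (A + μ) (y - x)⟫`.
On the sphere `L = q ≥ q x`, so the form of `A + μ` is nonnegative along every chord from `x` to the
sphere; up to a limit these have all directions. Thus `A + μ` is positive semidefinite, and
`L ≥ L x = q x ≥ 0` on the whole space.

The block matrix is the homogenization of `L`: its Hermitian form at `(y, 1)` is `L y`, and the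
multiples of such vectors are dense.
-/

lemma nonneg_apply_zero_of_forall_mem_Ioc {f : ℝ → ℝ} (hf : Continuous f)
    (h : ∀ ε ∈ Set.Ioc (0 : ℝ) 1, 0 ≤ f ε) : 0 ≤ f 0 :=
  le_on_closure h continuousOn_const hf.continuousOn <| by
    rw [closure_Ioc zero_ne_one]
    exact Set.left_mem_Icc.2 zero_le_one

section Ball

open scoped RealInnerProductSpace
open Metric

variable {E : Type*} [NormedAddCommGroup E] [InnerProductSpace ℝ E]

/-- The quadratic function with leading part `A`, linear part `2 b` and constant term `s`. The
factor `2` makes its gradient `2 (A x + b)` when `A` is symmetric. -/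
def quadraticFun (A : E →ₗ[ℝ] E) (b : E) (s : ℝ) (x : E) : ℝ :=
  ⟪x, A x⟫ + 2 * ⟪x, b⟫ + s

lemma quadraticFun_add {A : E →ₗ[ℝ] E} (hA : A.IsSymmetric) (b : E) (s : ℝ) (x w : E) :
    quadraticFun A b s (x + w) = quadraticFun A b s x + 2 * ⟪w, A x + b⟫ + ⟪w, A w⟫ := by
  have hsymm : ⟪x, A w⟫ = ⟪w, A x⟫ := by rw [← hA, real_inner_comm]
  simp only [quadraticFun, map_add, inner_add_left, inner_add_right, hsymm]
  ring

lemma quadraticFun_add_smul_one (A : E →ₗ[ℝ] E) (b : E) (s d μ : ℝ) (x : E) :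
    quadraticFun (A + μ • 1) b (s - μ * d ^ 2) x =
      quadraticFun A b s x + μ * (‖x‖ ^ 2 - d ^ 2) := by
  simp only [quadraticFun, LinearMap.add_apply, LinearMap.smul_apply, Module.End.one_apply,
    inner_add_right, real_inner_smul_right, real_inner_self_eq_norm_sq]
  ring

lemma continuous_quadraticFun [FiniteDimensional ℝ E] (A : E →ₗ[ℝ] E) (b : E) (s : ℝ) :
    Continuous (quadraticFun A b s) := by
  have hA : Continuous A := A.continuous_of_finiteDimensional
  unfold quadraticFun
  fun_prop

lemma inner_sub_nonneg_of_isMinOn_quadraticFun {A : E →ₗ[ℝ] E} (hA : A.IsSymmetric) {b : E} {s : ℝ}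
    {K : Set E} (hK : Convex ℝ K) {x : E} (hx : x ∈ K) (hmin : IsMinOn (quadraticFun A b s) K x)
    {z : E} (hz : z ∈ K) : 0 ≤ ⟪z - x, A x + b⟫ := by
  set w := z - x
  suffices 0 ≤ 2 * ⟪w, A x + b⟫ + 0 * ⟪w, A w⟫ by linarith
  refine nonneg_apply_zero_of_forall_mem_Ioc (f := fun ε ↦ 2 * ⟪w, A x + b⟫ + ε * ⟪w, A w⟫)
    (by fun_prop) fun ε hε ↦ ?_
  have hle : quadraticFun A b s x ≤ quadraticFun A b s (x + ε • w) :=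
    hmin (hK.add_smul_sub_mem hx hz ⟨hε.1.le, hε.2⟩)
  rw [quadraticFun_add hA, map_smul, real_inner_smul_left, real_inner_smul_left,
    real_inner_smul_right] at hle
  refine nonneg_of_mul_nonneg_right (?_ : 0 ≤ ε * _) hε.1
  linarith

lemma exists_eq_neg_smul_of_forall_inner_sub_nonneg {x g : E} {d : ℝ} (hd : 0 < d) (hx : ‖x‖ ≤ d)
    (h : ∀ z, ‖z‖ ≤ d → 0 ≤ ⟪z - x, g⟫) :
    ∃ μ : ℝ, 0 ≤ μ ∧ g = -(μ • x) ∧ μ * (‖x‖ ^ 2 - d ^ 2) = 0 := by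
  rcases eq_or_ne g 0 with rfl | hg
  · exact ⟨0, le_rfl, by simp, zero_mul _⟩
  have hg₀ : 0 < ‖g‖ := norm_pos_iff.2 hg
  have hlower : d * ‖g‖ ≤ ⟪x, -g⟫ := by
    have hz := h (-(d / ‖g‖) • g) (by
      rw [norm_smul, norm_neg, Real.norm_of_nonneg (by positivity), div_mul_cancel₀ _ hg₀.ne'])
    rw [inner_sub_left, real_inner_smul_left, real_inner_self_eq_norm_sq] at hz
    rw [inner_neg_right]
    have : -(d / ‖g‖) * ‖g‖ ^ 2 = -(d * ‖g‖) := by field_simp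
    linarith
  have hupper : ⟪x, -g⟫ ≤ ‖x‖ * ‖g‖ := by simpa using real_inner_le_norm x (-g)
  have hxd : ‖x‖ = d := hx.antisymm (le_of_mul_le_mul_right (hlower.trans hupper) hg₀)
  have hparallel : ‖g‖ • x = -(d • g) := by
    have heq : ⟪x, -g⟫ = ‖x‖ * ‖-g‖ := by
      rw [norm_neg]
      exact hupper.antisymm (hxd ▸ hlower)
    simpa [hxd] using inner_eq_norm_mul_iff_real.1 heq
  refine ⟨‖g‖ / d, by positivity, ?_, by simp [hxd]⟩
  rw [div_eq_inv_mul, mul_smul, hparallel, smul_neg, neg_neg, inv_smul_smul₀ hd.ne']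

lemma exists_ne_zero_norm_add_smul_eq {x v : E} {d : ℝ} (hx : ‖x‖ ≤ d) (hv : v ≠ 0)
    (htransversal : ‖x‖ < d ∨ ⟪x, v⟫ ≠ 0) : ∃ t : ℝ, t ≠ 0 ∧ ‖x + t • v‖ = d := by
  wlog hp : 0 ≤ ⟪x, v⟫ generalizing v
  · obtain ⟨t, ht, hnorm⟩ := this (neg_ne_zero.2 hv) (by simpa using htransversal)
      (by rw [inner_neg_right]; linarith)
    exact ⟨-t, neg_ne_zero.2 ht, by simpa using hnorm⟩
  have hv₀ : 0 < ‖v‖ := norm_pos_iff.2 hv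
  have hd : 0 ≤ d := (norm_nonneg x).trans hx
  set p := ⟪x, v⟫
  set D := p ^ 2 + ‖v‖ ^ 2 * (d ^ 2 - ‖x‖ ^ 2)
  have hD : 0 < D := by
    rcases htransversal with hlt | hne
    · have : 0 < d ^ 2 - ‖x‖ ^ 2 := sub_pos.2 (by gcongr)
      positivity
    · have : 0 ≤ d ^ 2 - ‖x‖ ^ 2 := sub_nonneg.2 (by gcongr)
      positivity
  -- Of the two roots of `‖x + t • v‖ ^ 2 = d ^ 2`, this is the one with larger absolute value.
  set t := -(p + √D) / ‖v‖ ^ 2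
  have ht : t * ‖v‖ ^ 2 = -(p + √D) := div_mul_cancel₀ _ (by positivity)
  refine ⟨t, div_ne_zero (neg_ne_zero.2 (by positivity)) (by positivity), ?_⟩
  rw [← sq_eq_sq₀ (norm_nonneg _) hd, norm_add_sq_real, real_inner_smul_right, norm_smul, mul_pow,
    Real.norm_eq_abs, sq_abs]
  refine mul_left_cancel₀ (pow_ne_zero 2 hv₀.ne') ?_
  linear_combination (t * ‖v‖ ^ 2 + p - √D) * ht + Real.sq_sqrt hD.le

lemma inner_map_self_nonneg_of_forall_chord {B : E →ₗ[ℝ] E} {x : E} {d : ℝ} (hd : 0 < d)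
    (hx : ‖x‖ ≤ d) (h : ∀ y, ‖y‖ = d → 0 ≤ ⟪y - x, B (y - x)⟫) (v : E) : 0 ≤ ⟪v, B v⟫ := by
  have of_transversal (w : E) (hw : ‖x‖ < d ∨ ⟪x, w⟫ ≠ 0) : 0 ≤ ⟪w, B w⟫ := by
    rcases eq_or_ne w 0 with rfl | hw₀
    · simp
    obtain ⟨t, ht, hnorm⟩ := exists_ne_zero_norm_add_smul_eq hx hw₀ hw
    have hchord := h (x + t • w) hnorm
    rw [add_sub_cancel_left, map_smul, real_inner_smul_left, real_inner_smul_right, ← mul_assoc]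
      at hchord
    exact nonneg_of_mul_nonneg_right hchord (mul_self_pos.2 ht)
  by_cases hv : ‖x‖ < d ∨ ⟪x, v⟫ ≠ 0
  · exact of_transversal v hv
  -- `v` is tangent to the sphere at `x`, but `v + ε • x` is not.
  obtain ⟨hdx, htangent⟩ : d ≤ ‖x‖ ∧ ⟪x, v⟫ = 0 := by simpa using hv
  suffices 0 ≤ ⟪v + (0 : ℝ) • x, B v + (0 : ℝ) • B x⟫ by simpa using this
  refine nonneg_apply_zero_of_forall_mem_Ioc (f := fun ε ↦ ⟪v + ε • x, B v + ε • B x⟫)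
    (by fun_prop) fun ε hε ↦ ?_
  have hne : ⟪x, v + ε • x⟫ ≠ 0 := by
    rw [inner_add_right, htangent, zero_add, real_inner_smul_right, real_inner_self_eq_norm_sq]
    have := hd.trans_le hdx
    exact (mul_pos hε.1 (by positivity)).ne'
  simpa using of_transversal (v + ε • x) (Or.inr hne)

theorem exists_multiplier_of_isMinOn_closedBall {A : E →ₗ[ℝ] E} (hA : A.IsSymmetric) {b : E}
    {s d : ℝ} (hd : 0 < d) {x : E} (hx : ‖x‖ ≤ d)
    (hmin : IsMinOn (quadraticFun A b s) (closedBall 0 d) x) :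
    ∃ μ : ℝ, 0 ≤ μ ∧ (A + μ • 1) x + b = 0 ∧ μ * (‖x‖ ^ 2 - d ^ 2) = 0 ∧
      (A + μ • 1).IsPositive := by
  obtain ⟨μ, hμ, hgrad, hcompl⟩ :
      ∃ μ : ℝ, 0 ≤ μ ∧ A x + b = -(μ • x) ∧ μ * (‖x‖ ^ 2 - d ^ 2) = 0 :=
    exists_eq_neg_smul_of_forall_inner_sub_nonneg hd hx fun z hz ↦
      inner_sub_nonneg_of_isMinOn_quadraticFun hA (convex_closedBall 0 d)
        (mem_closedBall_zero_iff.2 hx) hmin (mem_closedBall_zero_iff.2 hz)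
  have hcrit : (A + μ • 1) x + b = 0 := by
    rw [LinearMap.add_apply, add_right_comm, hgrad]
    simp
  have hsymm : (A + μ • 1).IsSymmetric := hA.add (.smul (by simp) .id)
  have hchord (y : E) (hy : ‖y‖ = d) : 0 ≤ ⟪y - x, (A + μ • 1) (y - x)⟫ := by
    have hle : quadraticFun A b s x ≤ quadraticFun A b s y := hmin (mem_closedBall_zero_iff.2 hy.le)
    have hL := quadraticFun_add hsymm b (s - μ * d ^ 2) x (y - x)
    rw [add_sub_cancel, hcrit, quadraticFun_add_smul_one, quadraticFun_add_smul_one, hcompl, hy,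
      inner_zero_right] at hL
    linarith
  refine ⟨μ, hμ, hcrit, hcompl, hsymm, fun v ↦ ?_⟩
  rw [real_inner_comm]
  exact inner_map_self_nonneg_of_forall_chord hd hx hchord v

theorem forall_quadraticFun_nonneg_closedBall_iff [FiniteDimensional ℝ E] {A : E →ₗ[ℝ] E}
    (hA : A.IsSymmetric) (b : E) (s : ℝ) {d : ℝ} (hd : 0 < d) :
    (∀ x, ‖x‖ ≤ d → 0 ≤ quadraticFun A b s x) ↔
      ∃ μ : ℝ, 0 ≤ μ ∧ ∀ x, 0 ≤ quadraticFun (A + μ • 1) b (s - μ * d ^ 2) x := by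
  constructor
  · intro h
    have : ProperSpace E := FiniteDimensional.proper ℝ E
    obtain ⟨x, hx, hmin⟩ := (isCompact_closedBall (0 : E) d).exists_isMinOn
      (nonempty_closedBall.2 hd.le) (continuous_quadraticFun A b s).continuousOn
    rw [mem_closedBall_zero_iff] at hx
    obtain ⟨μ, hμ, hcrit, hcompl, hpos⟩ := exists_multiplier_of_isMinOn_closedBall hA hd hx hmin
    refine ⟨μ, hμ, fun y ↦ ?_⟩
    calc 0 ≤ quadraticFun A b s x + ⟪y - x, (A + μ • 1) (y - x)⟫ :=
          add_nonneg (h x hx) (hpos.re_inner_nonneg_right (y - x))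
      _ = quadraticFun (A + μ • 1) b (s - μ * d ^ 2) (x + (y - x)) := by
          rw [quadraticFun_add hpos.isSymmetric, hcrit, quadraticFun_add_smul_one, hcompl]
          simp
      _ = quadraticFun (A + μ • 1) b (s - μ * d ^ 2) y := by rw [add_sub_cancel]
  · rintro ⟨μ, hμ, h⟩ x hx
    have hL := h x
    rw [quadraticFun_add_smul_one] at hL
    have : ‖x‖ ^ 2 ≤ d ^ 2 := by gcongr
    linarith [mul_nonpos_of_nonneg_of_nonpos hμ (sub_nonpos.2 this)]

end Ball

section Matrix

variable {𝕜 n : Type*} [RCLike 𝕜]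

/-- The matrix `[[Q, r], [rᴴ, c]]`, with the last row and column indexed by `Unit`. -/
def borderedMatrix (Q : Matrix n n 𝕜) (r : n → 𝕜) (c : ℝ) : Matrix (n ⊕ Unit) (n ⊕ Unit) 𝕜 :=
  fromBlocks Q (replicateCol Unit r) (replicateRow Unit (star r)) (of fun _ _ ↦ (c : 𝕜))

lemma isHermitian_borderedMatrix {Q : Matrix n n 𝕜} (hQ : Q.IsHermitian) (r : n → 𝕜) (c : ℝ) :
    (borderedMatrix Q r c).IsHermitian :=
  hQ.fromBlocks (conjTranspose_replicateCol r) (by ext; simp)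

variable [Fintype n]

lemma posSemidef_iff_forall_apply_eq_one {B : Matrix n n 𝕜} (hB : B.IsHermitian) (i : n) :
    B.PosSemidef ↔ ∀ z : n → 𝕜, z i = 1 → 0 ≤ RCLike.re (star z ⬝ᵥ B *ᵥ z) := by
  refine ⟨fun h z _ ↦ h.re_dotProduct_nonneg z, fun h ↦ ?_⟩
  have of_apply_ne_zero (z : n → 𝕜) (hz : z i ≠ 0) : 0 ≤ RCLike.re (star z ⬝ᵥ B *ᵥ z) := by
    have hscale : star z ⬝ᵥ B *ᵥ z =
        ((‖z i‖ ^ 2 : ℝ) : 𝕜) * (star ((z i)⁻¹ • z) ⬝ᵥ B *ᵥ ((z i)⁻¹ • z)) := by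
      nth_rw 1 2 [← smul_inv_smul₀ hz z]
      rw [star_smul, mulVec_smul, smul_dotProduct, dotProduct_smul, smul_smul, smul_eq_mul,
        RCLike.star_def, RCLike.conj_mul]
      push_cast
      rfl
    rw [hscale, RCLike.re_ofReal_mul]
    exact mul_nonneg (sq_nonneg _) (h _ (by simp [hz]))
  refine .of_dotProduct_mulVec_nonneg hB fun z ↦ RCLike.nonneg_iff.2
    ⟨?_, hB.im_star_dotProduct_mulVec_self z⟩
  by_cases hz : z i = 0
  · classical
    let f (ε : ℝ) : n → 𝕜 := z + (ε : 𝕜) • Pi.single i 1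
    have hf : Continuous f := by fun_prop
    suffices 0 ≤ RCLike.re (star (f 0) ⬝ᵥ B *ᵥ f 0) by simpa [f] using this
    refine nonneg_apply_zero_of_forall_mem_Ioc
      (f := fun ε ↦ RCLike.re (star (f ε) ⬝ᵥ B *ᵥ f ε)) (by fun_prop) fun ε hε ↦ ?_
    exact of_apply_ne_zero _ (by simpa [f, hz] using hε.1.ne')
  · exact of_apply_ne_zero z hz

lemma re_dotProduct_borderedMatrix_mulVec (Q : Matrix n n 𝕜) (r : n → 𝕜) (c : ℝ) (x : n → 𝕜) :
    RCLike.re (star (Sum.elim x 1) ⬝ᵥ borderedMatrix Q r c *ᵥ Sum.elim x 1) =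
      RCLike.re (star x ⬝ᵥ Q *ᵥ x) + 2 * RCLike.re (star x ⬝ᵥ r) + c := by
  have hsymm : RCLike.re (star r ⬝ᵥ x) = RCLike.re (star x ⬝ᵥ r) := by
    rw [star_dotProduct, RCLike.star_def, RCLike.conj_re]
  have hcol : replicateCol Unit r *ᵥ 1 = r := by ext; simp [mulVec, dotProduct]
  have hrow : replicateRow Unit (star r) *ᵥ x = fun _ ↦ star r ⬝ᵥ x := rfl
  have hcorner : (of fun _ _ ↦ (c : 𝕜) : Matrix Unit Unit 𝕜) *ᵥ 1 = fun _ ↦ (c : 𝕜) := by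
    ext; simp [mulVec, dotProduct]
  have hexpand : star (Sum.elim x 1) ⬝ᵥ borderedMatrix Q r c *ᵥ Sum.elim x 1 =
      star x ⬝ᵥ Q *ᵥ x + star x ⬝ᵥ r + (star r ⬝ᵥ x + c) := by
    rw [borderedMatrix, fromBlocks_mulVec, Function.star_sumElim, sumElim_dotProduct_sumElim,
      Sum.elim_comp_inl, Sum.elim_comp_inr, hcol, hrow, hcorner, dotProduct_add]
    simp [dotProduct]
  rw [hexpand, map_add, map_add, map_add, hsymm, RCLike.ofReal_re]
  ring

lemma posSemidef_borderedMatrix_iff {Q : Matrix n n 𝕜} (hQ : Q.IsHermitian) (r : n → 𝕜) (c : ℝ) :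
    (borderedMatrix Q r c).PosSemidef ↔
      ∀ x : n → 𝕜, 0 ≤ RCLike.re (star x ⬝ᵥ Q *ᵥ x) + 2 * RCLike.re (star x ⬝ᵥ r) + c := by
  simp only [← re_dotProduct_borderedMatrix_mulVec]
  rw [posSemidef_iff_forall_apply_eq_one (isHermitian_borderedMatrix hQ r c) (Sum.inr ())]
  refine ⟨fun h x ↦ h _ rfl, fun h z hz ↦ ?_⟩
  have : z = Sum.elim (z ∘ Sum.inl) 1 := by
    ext (i | ⟨⟩)
    exacts [rfl, hz]
  rw [this]
  exact h _

lemma real_inner_euclideanSpace (x y : EuclideanSpace 𝕜 n) :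
    inner ℝ x y = RCLike.re (inner 𝕜 x y) := by
  simp [PiLp.inner_apply, real_inner_eq_re_inner 𝕜]

variable [DecidableEq n]

lemma isSymmetric_restrictScalars_toEuclideanLin {Q : Matrix n n 𝕜} (hQ : Q.IsHermitian) :
    ((toEuclideanLin Q).restrictScalars ℝ).IsSymmetric := fun x y ↦ by
  rw [real_inner_euclideanSpace, real_inner_euclideanSpace]
  exact congrArg RCLike.re (isSymmetric_toEuclideanLin_iff.2 hQ x y)

lemma quadraticFun_toEuclideanLin (Q : Matrix n n 𝕜) (r : n → 𝕜) (s : ℝ) (x : n → 𝕜) :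
    quadraticFun ((toEuclideanLin Q).restrictScalars ℝ) (WithLp.toLp 2 r) s (WithLp.toLp 2 x) =
      RCLike.re (star x ⬝ᵥ Q *ᵥ x) + 2 * RCLike.re (star x ⬝ᵥ r) + s := by
  rw [quadraticFun, LinearMap.coe_restrictScalars, toLpLin_toLp, toLin'_apply,
    real_inner_euclideanSpace, real_inner_euclideanSpace, EuclideanSpace.inner_toLp_toLp,
    EuclideanSpace.inner_toLp_toLp, dotProduct_comm, dotProduct_comm r]

lemma restrictScalars_toEuclideanLin_add_smul_one (Q : Matrix n n 𝕜) (μ : ℝ) :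
    (toEuclideanLin (Q + (μ : 𝕜) • 1)).restrictScalars ℝ =
      (toEuclideanLin Q).restrictScalars ℝ + μ • 1 := by
  ext x i
  simp [RCLike.real_smul_eq_coe_mul, smul_mulVec]

theorem stmt_3_general {Q : Matrix n n 𝕜} (hQ : Q.IsHermitian) (r : n → 𝕜) (s : ℝ) {d : ℝ}
    (hd : 0 < d) :
    (∀ x : n → 𝕜, ‖WithLp.toLp 2 x‖ ≤ d →
        0 ≤ RCLike.re (star x ⬝ᵥ Q *ᵥ x) + 2 * RCLike.re (star x ⬝ᵥ r) + s) ↔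
      ∃ μ : ℝ, 0 ≤ μ ∧ (borderedMatrix (Q + (μ : 𝕜) • 1) r (s - μ * d ^ 2)).PosSemidef := by
  have : FiniteDimensional ℝ (EuclideanSpace 𝕜 n) := .trans ℝ 𝕜 _
  have hshift (μ : ℝ) : (Q + (μ : 𝕜) • 1).IsHermitian :=
    hQ.add (isHermitian_one.smul (RCLike.conj_ofReal μ))
  simpa only [(WithLp.equiv 2 (n → 𝕜)).forall_congr_left, WithLp.equiv_symm_apply,
    ← restrictScalars_toEuclideanLin_add_smul_one, quadraticFun_toEuclideanLin,
    posSemidef_borderedMatrix_iff (hshift _)] using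
    forall_quadraticFun_nonneg_closedBall_iff
      (isSymmetric_restrictScalars_toEuclideanLin hQ) (WithLp.toLp 2 r) s hd

end Matrix

/-- The spherical S-lemma. -/
theorem stmt_3 {M : ℕ} (Q : Matrix (Fin M) (Fin M) ℂ) (hQ : Q.IsHermitian)
    (r : Fin M → ℂ) (s d : ℝ) (hd : 0 < d) :
    (∀ x : Fin M → ℂ, ‖(EuclideanSpace.equiv (Fin M) ℂ).symm x‖ ≤ d →
        0 ≤ (star x ⬝ᵥ Q.mulVec x).re + 2 * (star x ⬝ᵥ r).re + s) ↔
      (∃ μ : ℝ, 0 ≤ μ ∧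
        (Matrix.fromBlocks (Q + (μ : ℂ) • 1) (Matrix.of fun i (_ : Unit) => r i)
          (Matrix.of fun (_ : Unit) j => star (r j))
          (Matrix.of fun (_ : Unit) (_ : Unit) => ((s - μ * d ^ 2 : ℝ) : ℂ))).PosSemidef) :=
  stmt_3_general hQ r s hd
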